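/- arXiv:1009.3151 — 7 statements merged into one kernel-verified Lean document; each statement's English description precedes it below -/
import Mathlib

section
/- Let H : ℝ^M → ℝ be differentiable and let ∇̄H : ℝ^M × ℝ^M → ℝ^M be a discrete gradient of H, i.e. H(u) − H(v) = ⟨∇̄H(v,u), u − v⟩ for all u, v ∈ ℝ^M. Let S be a skew-symmetric M×M real matrix (Sᵀ = −S), let Δt ∈ ℝ, and suppose y, y' ∈ ℝ^M satisfy y' − y = Δt • S (∇̄H(y, y')). Then H(y') = H(y), i.e. one step of the discrete gradient method exactly conserves H. -/
open Matrix

section SkewSymmetric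

variable {n R : Type*} [Fintype n] [NonUnitalCommRing R] {S : Matrix n n R}

theorem dotProduct_mulVec_eq_neg_of_transpose_eq_neg (hS : Sᵀ = -S) (x y : n → R) :
    x ⬝ᵥ S *ᵥ y = -(y ⬝ᵥ S *ᵥ x) := by
  rw [← dotProduct_transpose_mulVec, hS, neg_mulVec, dotProduct_neg]

theorem dotProduct_mulVec_self_eq_zero_of_transpose_eq_neg [IsAddTorsionFree R]
    (hS : Sᵀ = -S) (x : n → R) : x ⬝ᵥ S *ᵥ x = 0 :=
  self_eq_neg.mp (dotProduct_mulVec_eq_neg_of_transpose_eq_neg hS x x)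

end SkewSymmetric

theorem discrete_gradient_method_conserves_invariant_general
    {n R : Type*} [Fintype n] [CommRing R] [IsAddTorsionFree R]
    {H : (n → R) → R} {DG : (n → R) × (n → R) → (n → R)}
    (hDG : ∀ u v : n → R, H u - H v = DG (v, u) ⬝ᵥ (u - v))
    {S : Matrix n n R} (hS : Sᵀ = -S) {Δt : R} {y y' : n → R}
    (hstep : y' - y = Δt • S *ᵥ DG (y, y')) :
    H y' = H y := by
  refine sub_eq_zero.mp ?_
  calc H y' - H y = DG (y, y') ⬝ᵥ (y' - y) := hDG y' y
    _ = Δt • (DG (y, y') ⬝ᵥ S *ᵥ DG (y, y')) := by rw [hstep, dotProduct_smul]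
    _ = 0 := by rw [dotProduct_mulVec_self_eq_zero_of_transpose_eq_neg hS, smul_zero]

/-- One step of the discrete gradient method exactly conserves the invariant `H`:
if `∇̄H` satisfies the discrete gradient identity `H u - H v = ⟨∇̄H(v,u), u - v⟩`,
`S` is skew-symmetric and `y' - y = Δt • S (∇̄H(y,y'))`, then `H y' = H y`. -/
theorem discrete_gradient_method_conserves_invariant
    {M : ℕ} (H : (Fin M → ℝ) → ℝ) (hH : Differentiable ℝ H)
    (DG : (Fin M → ℝ) × (Fin M → ℝ) → (Fin M → ℝ))
    (hDGcont : Continuous DG)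
    (hDG : ∀ u v : Fin M → ℝ, H u - H v = DG (v, u) ⬝ᵥ (u - v))
    (S : Matrix (Fin M) (Fin M) ℝ) (hS : Sᵀ = -S)
    (Δt : ℝ) (y y' : Fin M → ℝ)
    (hstep : y' - y = Δt • S.mulVec (DG (y, y'))) :
    H y' = H y :=
  discrete_gradient_method_conserves_invariant_general hDG hS hstep
end

section
/- Let k ≥ 1 and let H : (ℝ^N)^k → ℝ be continuously differentiable and cyclic, i.e. H(w₁,…,w_k) = H(w₂,…,w_k,w₁) for all arguments. Denote by ∇₁H the gradient of H with respect to its first argument. Then for all w₁, …, w_{k+1} ∈ ℝ^N: H(w₂,…,w_{k+1}) − H(w₁,…,w_k) = ⟨ ∫₀¹ ∇₁H(ξ w_{k+1} + (1−ξ) w₁, w₂, …, w_k) dξ , w_{k+1} − w₁ ⟩. In other words, the polarised AVF discrete variational derivative satisfies the defining discrete-gradient identity for the polarised Hamiltonian. -/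
open RealInnerProductSpace

/-! Cyclicity identifies `H (w₂, …, w_{k+1})` with `H (w_{k+1}, w₂, …, w_k)`, so the left-hand
side is the increment of the slice `x ↦ H (x, w₂, …, w_k)` from `w₁` to `w_{k+1}`; the fundamental
theorem of calculus along the segment between these two points gives the inner product. -/

section Gradient

theorem continuous_gradient_of_contDiff {𝕜 E : Type*} [RCLike 𝕜] [NormedAddCommGroup E]
    [InnerProductSpace 𝕜 E] [CompleteSpace E] {f : E → 𝕜} {n : WithTop ℕ∞}
    (hf : ContDiff 𝕜 n f) (hn : n ≠ 0) : Continuous (gradient f) :=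
  (InnerProductSpace.toDual 𝕜 E).symm.continuous.comp (hf.continuous_fderiv hn)

theorem integral_fderiv_lineMap_eq_sub {E F : Type*} [NormedAddCommGroup E] [NormedSpace ℝ E]
    [NormedAddCommGroup F] [NormedSpace ℝ F] [CompleteSpace F] {f : E → F}
    (hf : ContDiff ℝ 1 f) (x y : E) :
    ∫ ξ in (0 : ℝ)..1, fderiv ℝ f (AffineMap.lineMap x y ξ) (y - x) = f y - f x := by
  have hderiv (ξ : ℝ) : HasDerivAt (fun ξ : ℝ => f (AffineMap.lineMap x y ξ))
      (fderiv ℝ f (AffineMap.lineMap x y ξ) (y - x)) ξ :=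
    (hf.differentiable one_ne_zero _).hasFDerivAt.comp_hasDerivAt ξ AffineMap.hasDerivAt_lineMap
  have hcont : Continuous fun ξ : ℝ => fderiv ℝ f (AffineMap.lineMap x y ξ) (y - x) :=
    ((hf.continuous_fderiv one_ne_zero).comp AffineMap.lineMap_continuous).clm_apply
      continuous_const
  simpa only [AffineMap.lineMap_apply_one, AffineMap.lineMap_apply_zero] using
    intervalIntegral.integral_eq_sub_of_hasDerivAt (fun ξ _ => hderiv ξ)
      (hcont.intervalIntegrable 0 1)

variable {E : Type*} [NormedAddCommGroup E] [InnerProductSpace ℝ E] [CompleteSpace E]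

theorem inner_intervalIntegral_left {g : ℝ → E} {μ : MeasureTheory.Measure ℝ} {a b : ℝ}
    (hg : IntervalIntegrable g μ a b) (v : E) :
    ⟪∫ ξ in a..b, g ξ ∂μ, v⟫ = ∫ ξ in a..b, ⟪g ξ, v⟫ ∂μ := by
  simpa only [innerSL_apply_apply, real_inner_comm v] using
    ((innerSL ℝ v).intervalIntegral_comp_comm hg).symm

theorem inner_integral_gradient_lineMap_eq_sub {f : E → ℝ} (hf : ContDiff ℝ 1 f) (x y : E) :
    ⟪∫ ξ in (0 : ℝ)..1, gradient f (AffineMap.lineMap x y ξ), y - x⟫ = f y - f x := by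
  have hcont : Continuous fun ξ : ℝ => gradient f (AffineMap.lineMap x y ξ) :=
    (continuous_gradient_of_contDiff hf one_ne_zero).comp AffineMap.lineMap_continuous
  calc
    _ = ∫ ξ in (0 : ℝ)..1, ⟪gradient f (AffineMap.lineMap x y ξ), y - x⟫ :=
      inner_intervalIntegral_left (hcont.intervalIntegrable 0 1) _
    _ = ∫ ξ in (0 : ℝ)..1, fderiv ℝ f (AffineMap.lineMap x y ξ) (y - x) := by
      simp only [inner_gradient_left]
    _ = f y - f x := integral_fderiv_lineMap_eq_sub hf x y

end Gradient

section Rotation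

variable {α : Type*} {k : ℕ} [NeZero k]

theorem update_init_zero_eq_init (w : Fin (k + 1) → α) :
    Function.update (Fin.init w) 0 (w 0) = Fin.init w := by
  rw [Function.update_eq_self_iff, Fin.init, Fin.castSucc_zero']

theorem rotate_update_init_last_eq_tail (w : Fin (k + 1) → α) :
    (fun i => Function.update (Fin.init w : Fin k → α) 0 (w (Fin.last k)) (i + 1)) =
      Fin.tail w := by
  obtain ⟨m, rfl⟩ := Nat.exists_eq_succ_of_ne_zero (NeZero.ne k)
  funext i
  cases i using Fin.lastCases with
  | last => rw [Fin.last_add_one, Function.update_self, Fin.tail, Fin.succ_last]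
  | cast j =>
    rw [Fin.coeSucc_eq_succ, Function.update_of_ne j.succ_ne_zero, Fin.init, Fin.tail,
      Fin.succ_castSucc]

end Rotation

theorem polarised_avf_discrete_gradient_identity_general
    {E : Type*} [NormedAddCommGroup E] [InnerProductSpace ℝ E] [CompleteSpace E]
    {k : ℕ} [NeZero k] (H : (Fin k → E) → ℝ)
    (hH : ∀ v : Fin k → E, ContDiff ℝ 1 fun x => H (Function.update v 0 x))
    (hcyc : ∀ v : Fin k → E, H v = H (fun i => v (i + 1)))
    (w : Fin (k + 1) → E) :
    H (Fin.tail w) - H (Fin.init w) =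
      ⟪∫ ξ in (0 : ℝ)..1,
          gradient (fun x => H (Function.update (Fin.init w) 0 x))
            (ξ • w (Fin.last k) + (1 - ξ) • w 0),
        w (Fin.last k) - w 0⟫ := by
  have hlast : H (Function.update (Fin.init w) 0 (w (Fin.last k))) = H (Fin.tail w) := by
    rw [hcyc, rotate_update_init_last_eq_tail]
  have hfirst : H (Function.update (Fin.init w) 0 (w 0)) = H (Fin.init w) := by
    rw [update_init_zero_eq_init]
  simp only [add_comm (_ • w (Fin.last k)), ← AffineMap.lineMap_apply_module]
  rw [inner_integral_gradient_lineMap_eq_sub (hH _), hlast, hfirst]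

/-- The polarised AVF discrete variational derivative of a cyclic, continuously
differentiable polarised Hamiltonian `H : (ℝ^N)^k → ℝ` satisfies the defining
discrete-gradient identity:
`H(w₂,…,w_{k+1}) - H(w₁,…,w_k) = ⟨∫₀¹ ∇₁H(ξ w_{k+1} + (1-ξ)w₁, w₂,…,w_k) dξ, w_{k+1} - w₁⟩`. -/
theorem polarised_avf_discrete_gradient_identity
    {N k : ℕ} [NeZero k]
    (H : (Fin k → EuclideanSpace ℝ (Fin N)) → ℝ) (hH : ContDiff ℝ 1 H)
    (hcyc : ∀ w : Fin k → EuclideanSpace ℝ (Fin N), H w = H (fun i => w (i + 1)))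
    (w : Fin (k + 1) → EuclideanSpace ℝ (Fin N)) :
    H (fun i : Fin k => w i.succ) - H (fun i : Fin k => w i.castSucc) =
      ⟪∫ ξ in (0:ℝ)..1,
          gradient (fun x => H (Function.update (fun i : Fin k => w i.castSucc) 0 x))
            (ξ • w (Fin.last k) + (1 - ξ) • w 0),
        w (Fin.last k) - w 0⟫ :=
  polarised_avf_discrete_gradient_identity_general H
    (fun v => hH.comp (contDiff_update 1 v 0)) hcyc w
end

section
/- Let k ≥ 1, let H : (ℝ^N)^k → ℝ, and let δ̄H : (ℝ^N)^{k+1} → ℝ^N be any map satisfying the discrete variational derivative identity: H(w₂,…,w_{k+1}) − H(w₁,…,w_k) = ⟨ δ̄H(w₁,…,w_{k+1}), w_{k+1} − w₁ ⟩ for all w₁,…,w_{k+1} ∈ ℝ^N. Let Δt ∈ ℝ, let (Dₙ)_{n∈ℕ} be skew-symmetric N×N real matrices, and let (Uₙ)_{n∈ℕ} be a sequence in ℝ^N satisfying the scheme U_{n+k} − U_n = k² Δt · Dₙ (δ̄H(U_n, U_{n+1}, …, U_{n+k})) for all n ∈ ℕ. Then the scheme is conservative: H(U_n, U_{n+1},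 …, U_{n+k−1}) = H(U₀, U₁, …, U_{k−1}) for all n ∈ ℕ. -/
open Matrix

/-- The window `(uₙ, uₙ₊₁, …, uₙ₊ₖ₋₁)` of `k` consecutive terms of the sequence `u`, the argument at
which a `k`-step scheme evaluates its energy. -/
def window {α : Type*} (k : ℕ) (u : ℕ → α) (n : ℕ) : Fin k → α :=
  fun i => u (n + i)

theorem window_zero {α : Type*} (k : ℕ) (u : ℕ → α) : window k u 0 = fun i : Fin k => u i :=
  funext fun i => congrArg u (Nat.zero_add i)

theorem init_window {α : Type*} (k : ℕ) (u : ℕ → α) (n : ℕ) :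
    Fin.init (window (k + 1) u n) = window k u n :=
  rfl

theorem tail_window {α : Type*} (k : ℕ) (u : ℕ → α) (n : ℕ) :
    Fin.tail (window (k + 1) u n) = window k u (n + 1) := by
  funext i
  simp only [Fin.tail, window, Fin.val_succ, Nat.add_right_comm, Nat.add_assoc]

section

variable {ι R : Type*} [Fintype ι] [CommRing R]

theorem dotProduct_mulVec_self_eq_zero_of_transpose_eq_neg_s3 [IsAddTorsionFree R]
    {A : Matrix ι ι R} (hA : Aᵀ = -A) (v : ι → R) : v ⬝ᵥ A *ᵥ v = 0 := by
  refine self_eq_neg.mp ?_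
  calc
    v ⬝ᵥ A *ᵥ v = v ⬝ᵥ Aᵀ *ᵥ v := (dotProduct_transpose_mulVec A v v).symm
    _ = -(v ⬝ᵥ A *ᵥ v) := by rw [hA, neg_mulVec, dotProduct_neg]

/-- `dH` is a discrete variational derivative of the energy `H` of `k` states: the change of `H`
when a window of `k + 1` states is shifted by one is the pairing of `dH` with the difference of the
outermost states. For `w = (w₁, …, wₖ₊₁)`, `Fin.init w` is `(w₁, …, wₖ)` and `Fin.tail w` is
`(w₂, …, wₖ₊₁)`. -/
def IsDiscreteVariationalDerivative {k : ℕ} (H : (Fin k → ι → R) → R)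
    (dH : (Fin (k + 1) → ι → R) → ι → R) : Prop :=
  ∀ w, H (Fin.tail w) - H (Fin.init w) = dH w ⬝ᵥ (w (Fin.last k) - w 0)

variable {k : ℕ} {H : (Fin k → ι → R) → R} {dH : (Fin (k + 1) → ι → R) → ι → R}

theorem IsDiscreteVariationalDerivative.window_succ_sub_window
    (hdH : IsDiscreteVariationalDerivative H dH) (U : ℕ → ι → R) (n : ℕ) :
    H (window k U (n + 1)) - H (window k U n) =
      dH (window (k + 1) U n) ⬝ᵥ (U (n + k) - U n) := by
  rw [← tail_window, ← init_window]
  exact hdH (window (k + 1) U n)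

theorem IsDiscreteVariationalDerivative.window_succ_eq_window [IsAddTorsionFree R]
    (hdH : IsDiscreteVariationalDerivative H dH) {c : R} {A : Matrix ι ι R} (hA : Aᵀ = -A)
    {U : ℕ → ι → R} {n : ℕ} (hU : U (n + k) - U n = c • A *ᵥ dH (window (k + 1) U n)) :
    H (window k U (n + 1)) = H (window k U n) := by
  rw [← sub_eq_zero, hdH.window_succ_sub_window, hU, dotProduct_smul,
    dotProduct_mulVec_self_eq_zero_of_transpose_eq_neg_s3 hA, smul_zero]

theorem pdvd_scheme_is_conservative_general [IsAddTorsionFree R]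
    (hdH : IsDiscreteVariationalDerivative H dH) {c : ℕ → R} {D : ℕ → Matrix ι ι R}
    (hD : ∀ n, (D n)ᵀ = -D n) {U : ℕ → ι → R}
    (hU : ∀ n, U (n + k) - U n = c n • D n *ᵥ dH (window (k + 1) U n)) (n : ℕ) :
    H (window k U n) = H (window k U 0) := by
  induction n with
  | zero => rfl
  | succ n ih => exact (hdH.window_succ_eq_window (hD n) (hU n)).trans ih

end

/-- The polarised discrete variational derivative (PDVD) scheme
`U_{n+k} - U_n = k² Δt Dₙ δ̄H(U_n,…,U_{n+k})`, built from any map `δ̄H` satisfying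
the discrete variational derivative identity and skew-symmetric matrices `Dₙ`,
is conservative: `H(U_n,…,U_{n+k-1}) = H(U₀,…,U_{k-1})` for all `n`. -/
theorem pdvd_scheme_is_conservative
    {N : ℕ} (k : ℕ) (hk : 1 ≤ k)
    (H : (Fin k → (Fin N → ℝ)) → ℝ)
    (dH : (Fin (k + 1) → (Fin N → ℝ)) → (Fin N → ℝ))
    (hdH : ∀ w : Fin (k + 1) → (Fin N → ℝ),
      H (fun i : Fin k => w i.succ) - H (fun i : Fin k => w i.castSucc) =
        dH w ⬝ᵥ (w (Fin.last k) - w 0))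
    (Δt : ℝ) (D : ℕ → Matrix (Fin N) (Fin N) ℝ) (hD : ∀ n, (D n)ᵀ = -(D n))
    (U : ℕ → (Fin N → ℝ))
    (hU : ∀ n : ℕ, U (n + k) - U n =
      ((k : ℝ) ^ 2 * Δt) • (D n).mulVec (dH (fun i : Fin (k + 1) => U (n + (i : ℕ))))) :
    ∀ n : ℕ, H (fun i : Fin k => U (n + (i : ℕ))) = H (fun i : Fin k => U (i : ℕ)) := by
  intro n
  exact (pdvd_scheme_is_conservative_general hdH hD hU n).trans (congrArg H (window_zero k U))
end

section
/- Let k ≥ 1 and let H : (ℝ^N)^k → ℝ be continuously differentiable, and suppose H is a quadratic polynomial in its first argument: for every fixed w₂,…,w_k ∈ ℝ^N and every w₁, h ∈ ℝ^N, the function t ↦ H(w₁ + t h, w₂, …, w_k) is a real polynomial in t of degree at most 2. Then for every fixed v, w₂, …, w_k ∈ ℝ^N, the polarised AVF discrete variational derivative F(u) := ∫₀¹ ∇₁H(ξu + (1−ξ)v, w₂, …, w_k) dξ is an affine function of u: F((1−s)u + s u') = (1−s)F(u) + s F(u') for all u, u' ∈ ℝ^N and s ∈ ℝ. Consequently the polarised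 AVF scheme requires only the solution of a linear system for its newest unknown, i.e. it is linearly implicit. -/
/-!
For a function `g` which is quadratic on every line, the central difference
`(g (x + h) - g (x - h)) / 2` is linear in `h` and affine in `x`. If `g` is continuous, the
remainder `g (x + h) - g x - (g (x + h) - g (x - h)) / 2` is homogeneous of degree two and
continuous in `h`, so the central difference is the Fréchet derivative. The gradient of `g` is
therefore affine, the trapezoidal rule evaluates its average over the segment from `v` to `u`
exactly as `(∇ g u + ∇ g v) / 2`, and this is affine in `u`.
-/

open Filter Topology Asymptotics

/-- A function whose restriction to every parametrised line `t ↦ x + t • h` is a polynomial of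
degree at most two. The coefficients may depend on `x` and `h` in an arbitrary way. -/
def IsQuadraticOnLines {E : Type*} [AddCommGroup E] [Module ℝ E] (g : E → ℝ) : Prop :=
  ∀ x h : E, ∃ a b c : ℝ, ∀ t : ℝ, g (x + t • h) = a * t ^ 2 + b * t + c

/-- The central difference of `g` at `x` with increment `h`, normalised so that it is the
derivative of `g` at `x` in the direction `h` when `g` is quadratic on lines. -/
noncomputable def centralDifference {E : Type*} [AddCommGroup E] (g : E → ℝ) (x h : E) : ℝ :=
  (g (x + h) - g (x - h)) / 2

theorem leadingCoeff_eq_zero_of_mul_quadratic_eq_quadratic {a b c α β γ : ℝ}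
    (h : ∀ t : ℝ, t * (a * t ^ 2 + b * t + c) = α * t ^ 2 + β * t + γ) : a = 0 := by
  -- The third difference annihilates the right-hand side.
  linear_combination (h 2 - 3 * h 1 + 3 * h 0 - h (-1)) / 6

theorem isLittleO_id_of_homogeneous_two {E F : Type*} [NormedAddCommGroup E] [NormedSpace ℝ E]
    [NormedAddCommGroup F] [NormedSpace ℝ F] {q : E → F} (hq : ContinuousAt q 0)
    (hsmul : ∀ (t : ℝ) (h : E), q (t • h) = t ^ 2 • q h) : q =o[𝓝 0] (id : E → E) := by
  -- Split `h = √‖h‖ • k h`: then `k h → 0`, while `q h = ‖h‖ • q (k h)`.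
  let k : E → E := fun h => (√‖h‖)⁻¹ • h
  have hk_smul (h : E) : √‖h‖ • k h = h := by
    rcases eq_or_ne h 0 with rfl | hh
    · simp [k]
    · exact smul_inv_smul₀ (Real.sqrt_ne_zero'.2 (norm_pos_iff.2 hh)) h
  have hk_norm (h : E) : ‖k h‖ = √‖h‖ := by
    rw [norm_smul, norm_inv, Real.norm_of_nonneg (Real.sqrt_nonneg _), inv_mul_eq_div,
      Real.div_sqrt]
  have hk : Tendsto k (𝓝 0) (𝓝 0) := by
    have hsqrt : Continuous fun h : E => √‖h‖ := by fun_prop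
    exact tendsto_zero_iff_norm_tendsto_zero.2 <| by simpa [hk_norm] using hsqrt.tendsto 0
  have hq_zero : q 0 = 0 := by simpa using hsmul 0 0
  have hqk : (fun h => q (k h)) =o[𝓝 0] (fun _ => (1 : ℝ)) :=
    (isLittleO_one_iff ℝ).2 (hq_zero ▸ hq.tendsto.comp hk)
  have hq_eq (h : E) : ‖h‖ • q (k h) = q h := by
    rw [← Real.sq_sqrt (norm_nonneg h), ← hsmul, hk_smul]
  have hmul := (isBigO_refl (fun h : E => ‖h‖) (𝓝 0)).smul_isLittleO hqk
  simp only [hq_eq, smul_eq_mul, mul_one] at hmul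
  exact hmul.of_norm_right

theorem integral_smul_add_one_sub_smul {F : Type*} [NormedAddCommGroup F] [NormedSpace ℝ F]
    [CompleteSpace F] (p q : F) :
    ∫ ξ in (0 : ℝ)..1, (ξ • p + (1 - ξ) • q) = (1 / 2 : ℝ) • (p + q) := by
  have hp : IntervalIntegrable (fun ξ : ℝ => ξ • p) MeasureTheory.volume 0 1 :=
    Continuous.intervalIntegrable (by fun_prop) 0 1
  have hq : IntervalIntegrable (fun ξ : ℝ => (1 - ξ) • q) MeasureTheory.volume 0 1 :=
    Continuous.intervalIntegrable (by fun_prop) 0 1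
  have hone_sub : ∫ ξ in (0 : ℝ)..1, (1 - ξ) = ∫ ξ in (0 : ℝ)..1, ξ := by
    simpa using intervalIntegral.integral_comp_sub_left (fun ξ : ℝ => ξ) (a := 0) (b := 1) 1
  rw [intervalIntegral.integral_add hp hq, intervalIntegral.integral_smul_const,
    intervalIntegral.integral_smul_const, hone_sub, integral_id, smul_add]
  norm_num

namespace IsQuadraticOnLines

section Algebra

variable {E : Type*} [AddCommGroup E] [Module ℝ E] {g : E → ℝ}

theorem centralDifference_smul (hg : IsQuadraticOnLines g) (x : E) (t : ℝ) (h : E) :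
    centralDifference g x (t • h) = t * centralDifference g x h := by
  obtain ⟨a, b, c, hline⟩ := hg x h
  have hcd (r : ℝ) : centralDifference g x (r • h) = r * b := by
    rw [centralDifference, sub_eq_add_neg x, ← neg_smul, hline, hline]
    ring
  have hone : centralDifference g x h = b := by simpa using hcd 1
  rw [hcd, hone]

theorem sub_sub_centralDifference_smul (hg : IsQuadraticOnLines g) (x : E) (t : ℝ) (h : E) :
    g (x + t • h) - g x - centralDifference g x (t • h) =
      t ^ 2 * (g (x + h) - g x - centralDifference g x h) := by
  obtain ⟨a, b, c, hline⟩ := hg x h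
  have hrem (r : ℝ) : g (x + r • h) - g x - centralDifference g x (r • h) = r ^ 2 * a := by
    have hzero : g x = c := by simpa using hline 0
    rw [centralDifference, sub_eq_add_neg x, ← neg_smul, hline, hline, hzero]
    ring
  have hone : g (x + h) - g x - centralDifference g x h = a := by simpa using hrem 1
  rw [hrem, hone]

theorem centralDifference_affine (hg : IsQuadraticOnLines g) (x y h : E) (s : ℝ) :
    centralDifference g ((1 - s) • x + s • y) h =
      (1 - s) * centralDifference g x h + s * centralDifference g y h := by
  -- With `d = y - x`, both `p t = 2 * centralDifference g (x + t • d) h` and `t * p t` are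
  -- quadratic in `t`, so `p` is affine.
  obtain ⟨a₁, b₁, c₁, hplus⟩ := hg (x + h) (y - x)
  obtain ⟨a₂, b₂, c₂, hminus⟩ := hg (x - h) (y - x)
  obtain ⟨a₃, b₃, c₃, hplus'⟩ := hg x (y - x + h)
  obtain ⟨a₄, b₄, c₄, hminus'⟩ := hg x (y - x - h)
  have hquadratic (t : ℝ) : 2 * centralDifference g (x + t • (y - x)) h =
      (a₁ - a₂) * t ^ 2 + (b₁ - b₂) * t + (c₁ - c₂) := by
    rw [centralDifference, add_right_comm, add_sub_right_comm, hplus, hminus]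
    ring
  have hmul_quadratic (t : ℝ) : t * ((a₁ - a₂) * t ^ 2 + (b₁ - b₂) * t + (c₁ - c₂)) =
      (a₃ - a₄) * t ^ 2 + (b₃ - b₄) * t + (c₃ - c₄) := by
    rw [← hquadratic, mul_left_comm, ← hg.centralDifference_smul, centralDifference, add_assoc,
      ← smul_add, add_sub_assoc, ← smul_sub, hplus', hminus']
    ring
  have hlead : a₁ - a₂ = 0 := leadingCoeff_eq_zero_of_mul_quadratic_eq_quadratic hmul_quadratic
  have hx := hquadratic 0
  have hy := hquadratic 1
  have hs := hquadratic s
  rw [zero_smul, add_zero] at hx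
  rw [one_smul, add_sub_cancel] at hy
  rw [show x + s • (y - x) = (1 - s) • x + s • y by module] at hs
  linear_combination (hs - (1 - s) * hx - s * hy + (s ^ 2 - s) * hlead) / 2

theorem centralDifference_add (hg : IsQuadraticOnLines g) (x h k : E) :
    centralDifference g x (h + k) = centralDifference g x h + centralDifference g x k := by
  -- The two paths from `x - h - k` to `x + h + k` around a parallelogram give the central
  -- differences at `x ± k` and `x ± h`, whose averages are those at `x` by affinity.
  have hmidpoint (d l : E) : centralDifference g (x + d) l + centralDifference g (x - d) l =
      2 * centralDifference g x l := by
    have haffine := hg.centralDifference_affine (x + d) (x - d) l (1 / 2)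
    rw [show (1 - 1 / 2 : ℝ) • (x + d) + (1 / 2 : ℝ) • (x - d) = x by module] at haffine
    linear_combination -2 * haffine
  have hh := hmidpoint k h
  have hk := hmidpoint h k
  simp only [centralDifference] at hh hk ⊢
  rw [add_right_comm x k h, add_sub_right_comm x k h, ← add_sub_right_comm x h k,
    sub_right_comm x k h] at hh
  rw [← add_assoc, ← sub_sub]
  linear_combination (hh + hk) / 2

end Algebra

section Derivative

variable {E : Type*} [NormedAddCommGroup E] [NormedSpace ℝ E] {g : E → ℝ}

theorem fderiv_apply (hg : IsQuadraticOnLines g) (hcont : Continuous g) (x h : E) :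
    fderiv ℝ g x h = centralDifference g x h := by
  have hcd : Continuous (centralDifference g x) := by
    unfold centralDifference
    fun_prop
  let L : E →L[ℝ] ℝ :=
    { toFun := centralDifference g x
      map_add' := hg.centralDifference_add x
      map_smul' := hg.centralDifference_smul x
      cont := hcd }
  have hL : HasFDerivAt g L x := by
    rw [hasFDerivAt_iff_isLittleO_nhds_zero]
    refine isLittleO_id_of_homogeneous_two (Continuous.continuousAt (by fun_prop)) ?_
    exact hg.sub_sub_centralDifference_smul x
  rw [hL.fderiv]
  rfl

theorem fderiv_affine (hg : IsQuadraticOnLines g) (hcont : Continuous g) (x y : E) (s : ℝ) :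
    fderiv ℝ g ((1 - s) • x + s • y) = (1 - s) • fderiv ℝ g x + s • fderiv ℝ g y := by
  ext h
  simpa [hg.fderiv_apply hcont] using hg.centralDifference_affine x y h s

end Derivative

section Gradient

variable {E : Type*} [NormedAddCommGroup E] [InnerProductSpace ℝ E] [CompleteSpace E] {g : E → ℝ}

theorem gradient_affine (hg : IsQuadraticOnLines g) (hcont : Continuous g) (x y : E) (s : ℝ) :
    gradient g ((1 - s) • x + s • y) = (1 - s) • gradient g x + s • gradient g y := by
  simp [gradient, hg.fderiv_affine hcont]

theorem integral_gradient_segment (hg : IsQuadraticOnLines g) (hcont : Continuous g) (u v : E) :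
    ∫ ξ in (0 : ℝ)..1, gradient g (ξ • u + (1 - ξ) • v) =
      (1 / 2 : ℝ) • (gradient g u + gradient g v) := by
  have hsegment (ξ : ℝ) :
      gradient g (ξ • u + (1 - ξ) • v) = ξ • gradient g u + (1 - ξ) • gradient g v := by
    rw [add_comm, hg.gradient_affine hcont, add_comm]
  simp only [hsegment, integral_smul_add_one_sub_smul]

end Gradient

end IsQuadraticOnLines

theorem polarised_avf_is_linearly_implicit_general {E : Type*} [NormedAddCommGroup E]
    [InnerProductSpace ℝ E] [CompleteSpace E] {g : E → ℝ} (hg : IsQuadraticOnLines g)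
    (hcont : Continuous g) (v u u' : E) (s : ℝ) :
    (∫ ξ in (0 : ℝ)..1, gradient g (ξ • ((1 - s) • u + s • u') + (1 - ξ) • v)) =
      (1 - s) • (∫ ξ in (0 : ℝ)..1, gradient g (ξ • u + (1 - ξ) • v)) +
        s • (∫ ξ in (0 : ℝ)..1, gradient g (ξ • u' + (1 - ξ) • v)) := by
  simp only [hg.integral_gradient_segment hcont, hg.gradient_affine hcont]
  module

/-- If the polarised Hamiltonian `H : (ℝ^N)^k → ℝ` is a quadratic polynomial in its first
argument, then for fixed `v, w₂, …, w_k` the polarised AVF discrete variational derivative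
`F(u) = ∫₀¹ ∇₁H(ξu + (1-ξ)v, w₂,…,w_k) dξ` is an affine function of `u`; hence the
polarised AVF scheme is linearly implicit. -/
theorem polarised_avf_is_linearly_implicit
    {N k : ℕ} [NeZero k]
    (H : (Fin k → EuclideanSpace ℝ (Fin N)) → ℝ) (hH : ContDiff ℝ 1 H)
    (hquad : ∀ (w : Fin k → EuclideanSpace ℝ (Fin N)) (w₁ h : EuclideanSpace ℝ (Fin N)),
      ∃ a b c : ℝ, ∀ t : ℝ,
        H (Function.update w 0 (w₁ + t • h)) = a * t ^ 2 + b * t + c)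
    (v : EuclideanSpace ℝ (Fin N)) (w : Fin k → EuclideanSpace ℝ (Fin N)) :
    ∀ (u u' : EuclideanSpace ℝ (Fin N)) (s : ℝ),
      (∫ ξ in (0:ℝ)..1,
          gradient (fun x => H (Function.update w 0 x))
            (ξ • ((1 - s) • u + s • u') + (1 - ξ) • v)) =
        (1 - s) • (∫ ξ in (0:ℝ)..1,
            gradient (fun x => H (Function.update w 0 x)) (ξ • u + (1 - ξ) • v)) +
          s • (∫ ξ in (0:ℝ)..1,
            gradient (fun x => H (Function.update w 0 x)) (ξ • u' + (1 - ξ) • v)) := by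
  exact polarised_avf_is_linearly_implicit_general (g := fun x => H (Function.update w 0 x))
    (hquad w) (hH.continuous.comp (continuous_const.update 0 continuous_id)) v
end

section
/- Let E be a real normed vector space, let k ≥ 1 be odd, and let H : E^k → ℝ be twice continuously Fréchet differentiable and cyclic, i.e. H(w₁,…,w_k) = H(w₂,…,w_k,w₁) for all arguments. Define 𝓗 : E → ℝ by 𝓗(u) = H(u,…,u), and for u ∈ E set B_{1ℓ}(h,h) := D²H(u,…,u)(ι₁ h, ι_ℓ h), where ι_j h ∈ E^k is the tuple with h in slot j and 0 elsewhere. Then for all u, h ∈ E: D²𝓗(u)(h,h) = k ( B_{11}(h,h) + 2 Σ_{ℓ=2}^{(k+1)/2} B_{1ℓ}(h,h) ). -/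
/-!
Put `B i j = D²H(u,…,u)(ι_i h, ι_j h)`. The diagonal is a linear map, so
`D²𝓗(u)(h,h) = ∑ i, ∑ j, B i j`. Cyclicity of `H`, read at a point of the diagonal, gives
`B (i + t) (j + t) = B i j` with indices modulo `k`; hence all `k` rows have the same sum. Together
with the symmetry of the second derivative it also gives `B 0 (-j) = B 0 j`, and as `k` is odd the
nonzero indices split into `(k - 1) / 2` pairs `{j, -j}`.
-/

section SecondDerivative

variable {𝕜 : Type*} [NontriviallyNormedField 𝕜]
  {E : Type*} [NormedAddCommGroup E] [NormedSpace 𝕜 E]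
  {F : Type*} [NormedAddCommGroup F] [NormedSpace 𝕜 F]
  {G : Type*} [NormedAddCommGroup G] [NormedSpace 𝕜 G]

theorem fderiv_fderiv_comp_continuousLinearMap {f : E → F} (L : G →L[𝕜] E) {x : G}
    (hf : ContDiffAt 𝕜 2 f (L x)) (a b : G) :
    fderiv 𝕜 (fderiv 𝕜 (fun y ↦ f (L y))) x a b =
      fderiv 𝕜 (fderiv 𝕜 f) (L x) (L a) (L b) := by
  have fderiv_comp_eventuallyEq :
      fderiv 𝕜 (fun y ↦ f (L y)) =ᶠ[nhds x] fun y ↦ (fderiv 𝕜 f (L y)).comp L := by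
    filter_upwards [L.continuous.continuousAt.eventually (hf.eventually (by simp))] with y hy
    exact ((hy.differentiableAt (by simp)).hasFDerivAt.comp y L.hasFDerivAt).fderiv
  have differentiableAt_fderiv : DifferentiableAt 𝕜 (fderiv 𝕜 f) (L x) :=
    (hf.fderiv_right (m := 1) (by norm_num)).differentiableAt (by simp)
  have hasFDerivAt_fderiv_comp :
      HasFDerivAt (fun y ↦ fderiv 𝕜 f (L y)) ((fderiv 𝕜 (fderiv 𝕜 f) (L x)).comp L) x :=
    differentiableAt_fderiv.hasFDerivAt.comp x L.hasFDerivAt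
  rw [fderiv_comp_eventuallyEq.fderiv_eq,
    (hasFDerivAt_fderiv_comp.clm_comp (hasFDerivAt_const L x)).fderiv]
  simp

variable {ι : Type*} [Fintype ι] [DecidableEq ι]

theorem fderiv_fderiv_diagonal {f : (ι → E) → F} {u : E}
    (hf : ContDiffAt 𝕜 2 f (fun _ ↦ u)) (a b : E) :
    fderiv 𝕜 (fderiv 𝕜 (fun x ↦ f (fun _ ↦ x))) u a b =
      ∑ i, ∑ j, fderiv 𝕜 (fderiv 𝕜 f) (fun _ ↦ u) (Pi.single i a) (Pi.single j b) := by
  have comp_diagonal := fderiv_fderiv_comp_continuousLinearMap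
    (ContinuousLinearMap.pi fun _ : ι ↦ ContinuousLinearMap.id 𝕜 E) hf a b
  have const_eq_sum_single (v : E) : (fun _ : ι ↦ v) = ∑ i, Pi.single i v :=
    (Finset.univ_sum_single _).symm
  calc
    _ = fderiv 𝕜 (fderiv 𝕜 f) (fun _ ↦ u) (fun _ ↦ a) (fun _ ↦ b) := comp_diagonal
    _ = _ := by
      rw [const_eq_sum_single a, const_eq_sum_single b]
      simp only [map_sum, sum_apply]
      exact Finset.sum_comm

theorem fderiv_fderiv_single_single_of_comp_perm {f : (ι → E) → F} (σ : Equiv.Perm ι)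
    (hσ : ∀ w, f (w ∘ σ) = f w) {x : ι → E} (hx : x ∘ σ = x) (hf : ContDiffAt 𝕜 2 f x)
    (i j : ι) (a b : E) :
    fderiv 𝕜 (fderiv 𝕜 f) x (Pi.single (σ i) a) (Pi.single (σ j) b) =
      fderiv 𝕜 (fderiv 𝕜 f) x (Pi.single i a) (Pi.single j b) := by
  let L : (ι → E) →L[𝕜] (ι → E) := Pi.compRightL 𝕜 (fun _ ↦ E) σ
  have L_fix : L x = x := hx
  have L_single (l : ι) (v : E) : L (Pi.single (σ l) v) = Pi.single l v :=
    (Pi.single_comp_equiv σ (σ l) v).trans (by rw [σ.symm_apply_apply])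
  have f_comp_L : (fun w ↦ f (L w)) = f := funext hσ
  have comp_L := fderiv_fderiv_comp_continuousLinearMap L (L_fix.symm ▸ hf)
    (Pi.single (σ i) a) (Pi.single (σ j) b)
  rwa [f_comp_L, L_fix, L_single, L_single] at comp_L

end SecondDerivative

section TranslationInvariant

variable {𝕜 : Type*} [NontriviallyNormedField 𝕜]
  {E : Type*} [NormedAddCommGroup E] [NormedSpace 𝕜 E]
  {F : Type*} [NormedAddCommGroup F] [NormedSpace 𝕜 F]
  {ι : Type*} [AddGroup ι] [Fintype ι] [DecidableEq ι] {f : (ι → E) → F} {u : E}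

theorem fderiv_fderiv_single_add_single_add (hinv : ∀ t w, f (fun i ↦ w (i + t)) = f w)
    (hf : ContDiffAt 𝕜 2 f (fun _ ↦ u)) (i j t : ι) (a b : E) :
    fderiv 𝕜 (fderiv 𝕜 f) (fun _ ↦ u) (Pi.single (i + t) a) (Pi.single (j + t) b) =
      fderiv 𝕜 (fderiv 𝕜 f) (fun _ ↦ u) (Pi.single i a) (Pi.single j b) :=
  fderiv_fderiv_single_single_of_comp_perm (Equiv.addRight t) (hinv t) rfl hf i j a b

theorem fderiv_fderiv_diagonal_of_translation_invariant
    (hinv : ∀ t w, f (fun i ↦ w (i + t)) = f w) (hf : ContDiffAt 𝕜 2 f (fun _ ↦ u)) (a b : E) :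
    fderiv 𝕜 (fderiv 𝕜 (fun x ↦ f (fun _ ↦ x))) u a b =
      Fintype.card ι •
        ∑ j, fderiv 𝕜 (fderiv 𝕜 f) (fun _ ↦ u) (Pi.single 0 a) (Pi.single j b) := by
  have row_sum (i : ι) :
      ∑ j, fderiv 𝕜 (fderiv 𝕜 f) (fun _ ↦ u) (Pi.single i a) (Pi.single j b) =
        ∑ j, fderiv 𝕜 (fderiv 𝕜 f) (fun _ ↦ u) (Pi.single 0 a) (Pi.single j b) := by
    rw [← Equiv.sum_comp (Equiv.addRight i)]
    refine Finset.sum_congr rfl fun j _ ↦ ?_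
    simpa using fderiv_fderiv_single_add_single_add hinv hf 0 j i a b
  rw [fderiv_fderiv_diagonal hf, Finset.sum_congr rfl fun i _ ↦ row_sum i, Finset.sum_const,
    Finset.card_univ]

theorem even_fderiv_fderiv_single_zero_single (hinv : ∀ t w, f (fun i ↦ w (i + t)) = f w)
    (hf : ContDiffAt 𝕜 (minSmoothness 𝕜 2) f (fun _ ↦ u)) (a : E) :
    Function.Even fun j ↦
      fderiv 𝕜 (fderiv 𝕜 f) (fun _ ↦ u) (Pi.single 0 a) (Pi.single j a) := by
  intro j
  have translate_by_j := fderiv_fderiv_single_add_single_add hinv (hf.of_le le_minSmoothness)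
    0 (-j) j a a
  rw [zero_add, neg_add_cancel] at translate_by_j
  exact translate_by_j.symm.trans (hf.isSymmSndFDerivAt le_rfl _ _)

end TranslationInvariant

section CyclicIndices

variable {k : ℕ} [NeZero k]

theorem apply_comp_add_of_apply_comp_add_one {α β : Type*} {f : (Fin k → α) → β}
    (hf : ∀ w, f (fun i ↦ w (i + 1)) = f w) (t : Fin k) (w : Fin k → α) :
    f (fun i ↦ w (i + t)) = f w := by
  have periodic : Function.Periodic (fun s ↦ f (fun i ↦ w (i + s))) 1 := fun s ↦ by
    simpa only [add_assoc, add_comm s] using hf fun i ↦ w (i + s)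
  have val_nsmul_one : (t : ℕ) • (1 : Fin k) = t := by
    open Fin.CommRing in simp
  simpa [val_nsmul_one] using (periodic.nsmul t).eq

theorem mk_add_one_mod_eq_add_one (i : Fin k) :
    (⟨((i : ℕ) + 1) % k, Nat.mod_lt _ i.pos⟩ : Fin k) = i + 1 := by
  ext
  simp [Fin.val_add]

variable {M : Type*} [AddCommMonoid M]

theorem sum_range_two_mul_add_one_of_reflect {m : ℕ} {c : ℕ → M}
    (hc : ∀ n ∈ Finset.Ico 1 (m + 1), c (2 * m + 1 - n) = c n) :
    ∑ n ∈ Finset.range (2 * m + 1), c n = c 0 + 2 • ∑ n ∈ Finset.Ico 1 (m + 1), c n := by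
  have upper_half :
      ∑ n ∈ Finset.Ico (m + 1) (2 * m + 1), c n = ∑ n ∈ Finset.Ico 1 (m + 1), c n := by
    rw [← Finset.sum_congr rfl hc, Finset.sum_Ico_reflect c 1 (by omega)]
    congr 2
    omega
  rw [Finset.range_eq_Ico, Finset.sum_eq_sum_Ico_succ_bot (by omega),
    ← Finset.sum_Ico_consecutive c (show 0 + 1 ≤ m + 1 by omega) (by omega), upper_half,
    zero_add, two_nsmul]

theorem sum_univ_of_even_of_odd_card (hk : Odd k) {c : Fin k → M} (hc : Function.Even c) :
    ∑ j, c j = c 0 + 2 • ∑ l ∈ Finset.Icc 2 ((k + 1) / 2), c (Fin.ofNat k (l - 1)) := by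
  obtain ⟨m, rfl⟩ := hk
  have reflect : ∀ n ∈ Finset.Ico 1 (m + 1),
      c (Fin.ofNat (2 * m + 1) (2 * m + 1 - n)) = c (Fin.ofNat (2 * m + 1) n) := by
    intro n hn
    have n_lt : n < 2 * m + 1 := by grind
    rw [← hc (Fin.ofNat _ n)]
    congr 1
    ext
    simp [Fin.val_neg', Nat.mod_eq_of_lt n_lt]
  calc
    ∑ j, c j = ∑ n ∈ Finset.range (2 * m + 1), c (Fin.ofNat _ n) := by
      simp [← Fin.sum_univ_eq_sum_range]
    _ = c 0 + 2 • ∑ n ∈ Finset.Ico 1 (m + 1), c (Fin.ofNat _ n) :=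
      sum_range_two_mul_add_one_of_reflect reflect
    _ = c 0 + 2 • ∑ l ∈ Finset.Icc 2 ((2 * m + 1 + 1) / 2), c (Fin.ofNat _ (l - 1)) := by
      rw [show (2 * m + 1 + 1) / 2 = m + 1 by omega, ← Finset.Ico_add_one_right_eq_Icc,
        ← Finset.sum_Ico_add_right_sub_eq (a := 1) (c := 1)]

end CyclicIndices

theorem diagonal_second_derivative_of_cyclic_odd_general
    {𝕜 : Type*} [NontriviallyNormedField 𝕜]
    {E : Type*} [NormedAddCommGroup E] [NormedSpace 𝕜 E]
    {F : Type*} [NormedAddCommGroup F] [NormedSpace 𝕜 F]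
    {k : ℕ} [NeZero k] (hodd : Odd k) {H : (Fin k → E) → F} {u : E}
    (hH : ContDiffAt 𝕜 (minSmoothness 𝕜 2) H (fun _ ↦ u))
    (hcyc : ∀ w, H (fun i ↦ w (i + 1)) = H w) (h : E) :
    fderiv 𝕜 (fderiv 𝕜 (fun x ↦ H (fun _ ↦ x))) u h h =
      k •
        (fderiv 𝕜 (fderiv 𝕜 H) (fun _ ↦ u) (Pi.single 0 h) (Pi.single 0 h) +
          2 • ∑ l ∈ Finset.Icc 2 ((k + 1) / 2),
            fderiv 𝕜 (fderiv 𝕜 H) (fun _ ↦ u)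
              (Pi.single 0 h) (Pi.single (Fin.ofNat k (l - 1)) h)) := by
  have translation_invariant := apply_comp_add_of_apply_comp_add_one hcyc
  rw [fderiv_fderiv_diagonal_of_translation_invariant translation_invariant
      (hH.of_le le_minSmoothness), Fintype.card_fin,
    sum_univ_of_even_of_odd_card hodd
      (even_fderiv_fderiv_single_zero_single translation_invariant hH h)]

/-- For odd `k` and a twice continuously differentiable cyclic `H : E^k → ℝ`, the second
derivative of the diagonal restriction `𝓗(u) = H(u,…,u)` satisfies
`D²𝓗(u)(h,h) = k (B₁₁(h,h) + 2 Σ_{ℓ=2}^{(k+1)/2} B_{1ℓ}(h,h))`, where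
`B_{1ℓ}(h,h) = D²H(u,…,u)(ι₁ h, ι_ℓ h)` (slot `ℓ` is 0-based index `ℓ-1`). -/
theorem diagonal_second_derivative_of_cyclic_odd
    {E : Type*} [NormedAddCommGroup E] [NormedSpace ℝ E]
    {k : ℕ} (hk : 1 ≤ k) (hodd : Odd k)
    (H : (Fin k → E) → ℝ) (hH : ContDiff ℝ 2 H)
    (hcyc : ∀ w : Fin k → E,
      H w = H (fun i : Fin k => w ⟨((i : ℕ) + 1) % k, Nat.mod_lt _ i.pos⟩))
    (u h : E) :
    fderiv ℝ (fderiv ℝ (fun x : E => H (fun _ => x))) u h h =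
      (k : ℝ) *
        (fderiv ℝ (fderiv ℝ H) (fun _ => u)
            (Pi.single (⟨0, by omega⟩ : Fin k) h) (Pi.single (⟨0, by omega⟩ : Fin k) h) +
          2 * ∑ l ∈ Finset.Icc 2 ((k + 1) / 2),
            fderiv ℝ (fderiv ℝ H) (fun _ => u)
              (Pi.single (⟨0, by omega⟩ : Fin k) h)
              (Pi.single (⟨(l - 1) % k, Nat.mod_lt _ (by omega)⟩ : Fin k) h)) := by
  have : NeZero k := ⟨by omega⟩
  simpa only [nsmul_eq_mul, Nat.cast_ofNat, Fin.ofNat, Fin.mk_zero'] using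
    diagonal_second_derivative_of_cyclic_odd_general (𝕜 := ℝ) (F := ℝ) hodd (u := u)
      (by simpa using hH.contDiffAt)
      (fun w ↦ by simpa only [mk_add_one_mod_eq_add_one] using (hcyc w).symm) h
end

section
/- Let θ ∈ ℝ, Δt > 0, k ∈ ℤ, and let ζ ∈ ℂ with ζ ≠ 0. Set τ = −k³Δt and define Uₙ : ℝ → ℂ by Uₙ(x) = ζⁿ e^{ikx}. Then the sequence (Uₙ) satisfies the linearly implicit scheme for the Airy equation, (U_{n+2}(x) − U_n(x))/(2Δt) = d/dx [ θ(U_{n+2}''(x) + U_n''(x))/2 + (1−θ) U_{n+1}''(x) ] for all n ∈ ℕ and all x ∈ ℝ, if and only if ζ satisfies the quadratic equation (1 − θτi)ζ² − 2(1−θ)τi ζ − (1 + θτi) = 0. -/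
/-- The Fourier mode ansatz `Uₙ(x) = ζⁿ e^{ikx}`. -/
noncomputable def airyMode (ζ : ℂ) (k : ℤ) (n : ℕ) (x : ℝ) : ℂ :=
  ζ ^ n * Complex.exp (Complex.I * (k : ℂ) * (x : ℂ))

/-!
On `Uₙ(x) = ζⁿ eᶜˣ` a time shift acts as multiplication by `ζ` and a space derivative as
multiplication by `c`. Hence the residual of the scheme is `P(ζ) / (2Δt) * Uₙ(x)` with `P`
quadratic, and it vanishes identically exactly when `P(ζ) = 0` because `U₀` has no zeros. For
`c = ik` one has `c³Δt = -ik³Δt = τi`.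
-/

/-- The separated ansatz `ζⁿ eᶜˣ` with an arbitrary complex exponent `c`; the Fourier mode
`airyMode` is the case `c = ik`. -/
noncomputable def expMode (ζ c : ℂ) (n : ℕ) (x : ℝ) : ℂ :=
  ζ ^ n * Complex.exp (c * x)

/-- The average `θ(U''ₙ₊₂ + U''ₙ)/2 + (1 - θ)U''ₙ₊₁` that replaces `u_xx` in the two-step scheme:
up to sign, the polarised variational derivative of `(1/2)∫ u_x² dx`. -/
noncomputable def polarisedSecondDeriv (θ : ℂ) (U : ℕ → ℝ → ℂ) (n : ℕ) (x : ℝ) : ℂ :=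
  θ * (deriv (deriv (U (n + 2))) x + deriv (deriv (U n)) x) / 2 +
    (1 - θ) * deriv (deriv (U (n + 1))) x

/-- The von Neumann stability polynomial of the two-step scheme, evaluated at `ζ`. The parameter `σ`
is `c³Δt` for the exponent `c`, that is `τi` for a Fourier mode. -/
def stabilityPolynomial (θ σ ζ : ℂ) : ℂ :=
  (1 - θ * σ) * ζ ^ 2 - 2 * (1 - θ) * σ * ζ - (1 + θ * σ)

section ExpMode

variable (θ ζ c : ℂ) (n : ℕ) (x : ℝ)

theorem expMode_add (m : ℕ) : expMode ζ c (n + m) x = ζ ^ m * expMode ζ c n x := by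
  simp only [expMode, pow_add]
  ring

theorem expMode_zero_ne_zero : expMode ζ c 0 x ≠ 0 := by
  simp [expMode]

theorem hasDerivAt_expMode : HasDerivAt (expMode ζ c n) (c * expMode ζ c n x) x := by
  have hexp : HasDerivAt (fun y : ℝ => Complex.exp (c * y)) (Complex.exp (c * x) * (c * 1)) x :=
    ((hasDerivAt_id x).ofReal_comp.const_mul c).cexp
  refine (hexp.const_mul (ζ ^ n)).congr_deriv ?_
  simp only [expMode]
  ring

theorem deriv_const_mul_expMode (a : ℂ) :
    deriv (fun y => a * expMode ζ c n y) = fun y => a * c * expMode ζ c n y := by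
  funext y
  rw [((hasDerivAt_expMode ζ c n y).const_mul a).deriv, mul_assoc]

theorem deriv_deriv_expMode :
    deriv (deriv (expMode ζ c n)) = fun y => c ^ 2 * expMode ζ c n y := by
  have hderiv : deriv (expMode ζ c n) = fun y => c * expMode ζ c n y :=
    funext fun y => (hasDerivAt_expMode ζ c n y).deriv
  rw [hderiv, deriv_const_mul_expMode, sq]

theorem polarisedSecondDeriv_expMode :
    polarisedSecondDeriv θ (expMode ζ c) n =
      fun y => (θ * (ζ ^ 2 + 1) / 2 + (1 - θ) * ζ) * c ^ 2 * expMode ζ c n y := by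
  funext y
  simp only [polarisedSecondDeriv, deriv_deriv_expMode, expMode_add]
  ring

theorem deriv_polarisedSecondDeriv_expMode :
    deriv (polarisedSecondDeriv θ (expMode ζ c) n) x =
      (θ * (ζ ^ 2 + 1) / 2 + (1 - θ) * ζ) * c ^ 3 * expMode ζ c n x := by
  rw [polarisedSecondDeriv_expMode, deriv_const_mul_expMode]
  ring

theorem airy_scheme_residual_expMode {Δt : ℂ} (hΔt : Δt ≠ 0) :
    (expMode ζ c (n + 2) x - expMode ζ c n x) / (2 * Δt) -
        deriv (polarisedSecondDeriv θ (expMode ζ c) n) x =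
      stabilityPolynomial θ (c ^ 3 * Δt) ζ / (2 * Δt) * expMode ζ c n x := by
  rw [deriv_polarisedSecondDeriv_expMode, expMode_add, stabilityPolynomial]
  field_simp
  ring

end ExpMode

theorem airy_scheme_iff_stability_polynomial_general (θ ζ c : ℂ) {Δt : ℂ} (hΔt : Δt ≠ 0) :
    (∀ (n : ℕ) (x : ℝ),
        (expMode ζ c (n + 2) x - expMode ζ c n x) / (2 * Δt) =
          deriv (polarisedSecondDeriv θ (expMode ζ c) n) x) ↔
      stabilityPolynomial θ (c ^ 3 * Δt) ζ = 0 := by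
  simp only [← sub_eq_zero (b := deriv _ _), airy_scheme_residual_expMode θ ζ c _ _ hΔt]
  constructor
  · intro hresidual
    simpa [hΔt, expMode_zero_ne_zero] using hresidual 0 0
  · intro hroot n x
    rw [hroot, zero_div, zero_mul]

theorem stabilityPolynomial_I_mul (θ ζ Δt k : ℂ) :
    stabilityPolynomial θ ((Complex.I * k) ^ 3 * Δt) ζ =
      (1 - θ * (-k ^ 3 * Δt) * Complex.I) * ζ ^ 2 -
        2 * (1 - θ) * (-k ^ 3 * Δt) * Complex.I * ζ -
        (1 + θ * (-k ^ 3 * Δt) * Complex.I) := by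
  rw [stabilityPolynomial, mul_pow, Complex.I_pow_three]
  ring

/-- The mode `Uₙ(x) = ζⁿ e^{ikx}` satisfies the two-step linearly implicit scheme for the
Airy equation, `(U_{n+2} - U_n)/(2Δt) = ∂ₓ(θ(U''_{n+2} + U''_n)/2 + (1-θ)U''_{n+1})`,
if and only if `ζ` is a root of the von Neumann stability polynomial
`(1 - θτi)ζ² - 2(1-θ)τi ζ - (1 + θτi)` with `τ = -k³Δt`. -/
theorem airy_scheme_iff_stability_polynomial
    (θ Δt : ℝ) (hΔt : 0 < Δt) (k : ℤ) (ζ : ℂ) (hζ : ζ ≠ 0) :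
    (∀ (n : ℕ) (x : ℝ),
        (airyMode ζ k (n + 2) x - airyMode ζ k n x) / (2 * (Δt : ℂ)) =
          deriv (fun y : ℝ =>
            (θ : ℂ) * (deriv (deriv (airyMode ζ k (n + 2))) y +
                deriv (deriv (airyMode ζ k n)) y) / 2 +
              (1 - (θ : ℂ)) * deriv (deriv (airyMode ζ k (n + 1))) y) x) ↔
      (1 - (θ : ℂ) * ((-(k : ℝ) ^ 3 * Δt : ℝ) : ℂ) * Complex.I) * ζ ^ 2 -
          2 * (1 - (θ : ℂ)) * ((-(k : ℝ) ^ 3 * Δt : ℝ) : ℂ) * Complex.I * ζ -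
          (1 + (θ : ℂ) * ((-(k : ℝ) ^ 3 * Δt : ℝ) : ℂ) * Complex.I) = 0 := by
  push_cast
  rw [← stabilityPolynomial_I_mul]
  exact airy_scheme_iff_stability_polynomial_general θ ζ (Complex.I * k)
    (Complex.ofReal_ne_zero.mpr hΔt.ne')
end

section
/- Let L > 0, Δt ≠ 0, and let u, v : ℝ → ℝ be smooth L-periodic functions satisfying, for every x ∈ ℝ, the fully implicit AVF scheme for the KdV equation: (v(x) − u(x))/Δt + (v'''(x) + u'''(x))/2 + d/dx[ (v(x)² + v(x)u(x) + u(x)²)/3 ] = 0. Then the KdV Hamiltonian is exactly conserved over the step: ∫₀ᴸ ( (1/2) v'(x)² − (1/3) v(x)³ ) dx = ∫₀ᴸ ( (1/2) u'(x)² − (1/3) u(x)³ ) dx. -/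
/-!
The scheme is a discrete gradient method: `v - u = Δt * G'`, where
`G = -(v'' + u'') / 2 - (v² + v u + u²) / 3` satisfies `𝓗[v] - 𝓗[u] = ∫ G (v - u)`, by the
factorisations of `v'² - u'²` and `v³ - u³` and one integration by parts. Hence
`𝓗[v] - 𝓗[u] = Δt ∫ G G'`, which vanishes because `G` is periodic.
-/

theorem periodic_deriv {𝕜 F : Type*} [NontriviallyNormedField 𝕜] [NormedAddCommGroup F]
    [NormedSpace 𝕜 F] {f : 𝕜 → F} {c : 𝕜} (hf : Function.Periodic f c) :
    Function.Periodic (deriv f) c := fun x => by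
  rw [← deriv_comp_add_const, hf.funext]

theorem integral_mul_deriv_self_eq_zero {f : ℝ → ℝ} {a b : ℝ} (hf : ContDiff ℝ 1 f)
    (hab : f a = f b) : ∫ x in a..b, f x * deriv f x = 0 := by
  have substitution : ∫ x in a..b, f x * deriv f x = ∫ y in f a..f b, y :=
    intervalIntegral.integral_comp_mul_deriv (g := id)
      (fun x _ => (hf.differentiable one_ne_zero x).hasDerivAt)
      hf.continuous_deriv_one.continuousOn continuous_id
  rw [substitution, hab, intervalIntegral.integral_same]

theorem integral_deriv_sq_sub_deriv_sq {u v : ℝ → ℝ} {a b : ℝ} (hu : ContDiff ℝ 2 u)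
    (hv : ContDiff ℝ 2 v)
    (hab : (v a - u a) * (deriv v a + deriv u a) = (v b - u b) * (deriv v b + deriv u b)) :
    ∫ x in a..b, (deriv v x ^ 2 - deriv u x ^ 2) =
      -∫ x in a..b, (v x - u x) * (deriv (deriv v) x + deriv (deriv u) x) := by
  have hu₁ : ContDiff ℝ 1 (deriv u) := hu.deriv'
  have hv₁ : ContDiff ℝ 1 (deriv v) := hv.deriv'
  have by_parts := intervalIntegral.integral_mul_deriv_eq_deriv_mul (a := a) (b := b)
    (fun x _ => (hv.differentiable two_ne_zero x).hasDerivAt.sub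
      (hu.differentiable two_ne_zero x).hasDerivAt)
    (fun x _ => (hv₁.differentiable one_ne_zero x).hasDerivAt.add
      (hu₁.differentiable one_ne_zero x).hasDerivAt)
    ((hv₁.continuous.sub hu₁.continuous).intervalIntegrable a b)
    ((hv₁.continuous_deriv_one.add hu₁.continuous_deriv_one).intervalIntegrable a b)
  simp only [Pi.sub_apply, Pi.add_apply, hab, sub_self, zero_sub] at by_parts
  rw [by_parts, neg_neg]
  congr 1 with x
  ring

/-- The KdV Hamiltonian `𝓗[u]` over one period `[0, L]`. -/
noncomputable def kdvHamiltonian (L : ℝ) (u : ℝ → ℝ) : ℝ :=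
  ∫ x in (0 : ℝ)..L, ((1 / 2) * (deriv u x) ^ 2 - (1 / 3) * (u x) ^ 3)

/-- The average vector field discrete gradient of the KdV Hamiltonian: the mean of the variational
derivative `δ𝓗/δw = -w'' - w²` over the segment of states `w` from `u` to `v`. -/
noncomputable def kdvDiscreteGradient (u v : ℝ → ℝ) (x : ℝ) : ℝ :=
  -((deriv (deriv v) x + deriv (deriv u) x) / 2) - (v x ^ 2 + v x * u x + u x ^ 2) / 3

section

variable {u v : ℝ → ℝ} {L : ℝ}

theorem contDiff_kdvDiscreteGradient {n : WithTop ℕ∞} (hu : ContDiff ℝ (n + 2) u)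
    (hv : ContDiff ℝ (n + 2) v) : ContDiff ℝ n (kdvDiscreteGradient u v) := by
  have contDiff_deriv_deriv {f : ℝ → ℝ} (hf : ContDiff ℝ (n + 2) f) :
      ContDiff ℝ n (deriv (deriv f)) := by
    rw [← one_add_one_eq_two, ← add_assoc] at hf
    exact hf.deriv'.deriv'
  have hu₀ : ContDiff ℝ n u := hu.of_le le_self_add
  have hv₀ : ContDiff ℝ n v := hv.of_le le_self_add
  exact (((contDiff_deriv_deriv hv).add (contDiff_deriv_deriv hu)).div_const 2).neg.sub
    ((((hv₀.pow 2).add (hv₀.mul hu₀)).add (hu₀.pow 2)).div_const 3)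

theorem periodic_kdvDiscreteGradient (hu : Function.Periodic u L) (hv : Function.Periodic v L) :
    Function.Periodic (kdvDiscreteGradient u v) L := fun x => by
  simp only [kdvDiscreteGradient, hu x, hv x, periodic_deriv (periodic_deriv hu) x,
    periodic_deriv (periodic_deriv hv) x]

theorem kdvHamiltonian_sub (hu : ContDiff ℝ 1 u) (hv : ContDiff ℝ 1 v) :
    kdvHamiltonian L v - kdvHamiltonian L u =
      (1 / 2) * (∫ x in (0 : ℝ)..L, (deriv v x ^ 2 - deriv u x ^ 2)) -
        ∫ x in (0 : ℝ)..L, (v x ^ 3 - u x ^ 3) / 3 := by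
  have density_integrable {f : ℝ → ℝ} (hf : ContDiff ℝ 1 f) :
      IntervalIntegrable (fun x => (1 / 2) * deriv f x ^ 2 - (1 / 3) * f x ^ 3)
        MeasureTheory.volume 0 L :=
    ((continuous_const.mul (hf.continuous_deriv_one.pow 2)).sub
      (continuous_const.mul (hf.continuous.pow 3))).intervalIntegrable 0 L
  have quadratic_integrable :
      IntervalIntegrable (fun x => deriv v x ^ 2 - deriv u x ^ 2) MeasureTheory.volume 0 L :=
    ((hv.continuous_deriv_one.pow 2).sub (hu.continuous_deriv_one.pow 2)).intervalIntegrable 0 L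
  have cubic_integrable :
      IntervalIntegrable (fun x => (v x ^ 3 - u x ^ 3) / 3) MeasureTheory.volume 0 L :=
    (((hv.continuous.pow 3).sub (hu.continuous.pow 3)).div_const 3).intervalIntegrable 0 L
  rw [kdvHamiltonian, kdvHamiltonian,
    ← intervalIntegral.integral_sub (density_integrable hv) (density_integrable hu),
    ← intervalIntegral.integral_const_mul,
    ← intervalIntegral.integral_sub (quadratic_integrable.const_mul _) cubic_integrable]
  congr 1 with x
  ring

theorem kdvHamiltonian_sub_eq_integral_kdvDiscreteGradient_mul_sub (hu : ContDiff ℝ 2 u)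
    (hv : ContDiff ℝ 2 v) (hup : Function.Periodic u L) (hvp : Function.Periodic v L) :
    kdvHamiltonian L v - kdvHamiltonian L u =
      ∫ x in (0 : ℝ)..L, kdvDiscreteGradient u v x * (v x - u x) := by
  have hu₂ : Continuous (deriv (deriv u)) := ContDiff.continuous_deriv_one hu.deriv'
  have hv₂ : Continuous (deriv (deriv v)) := ContDiff.continuous_deriv_one hv.deriv'
  have by_parts_integrable :
      IntervalIntegrable (fun x => -((v x - u x) * (deriv (deriv v) x + deriv (deriv u) x)))
        MeasureTheory.volume 0 L :=
    ((hv.continuous.sub hu.continuous).mul (hv₂.add hu₂)).neg.intervalIntegrable 0 L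
  have cubic_integrable :
      IntervalIntegrable (fun x => (v x ^ 3 - u x ^ 3) / 3) MeasureTheory.volume 0 L :=
    (((hv.continuous.pow 3).sub (hu.continuous.pow 3)).div_const 3).intervalIntegrable 0 L
  have boundary_eq :
      (v 0 - u 0) * (deriv v 0 + deriv u 0) = (v L - u L) * (deriv v L + deriv u L) := by
    rw [hup.eq, hvp.eq, (periodic_deriv hup).eq, (periodic_deriv hvp).eq]
  rw [kdvHamiltonian_sub (hu.of_le one_le_two) (hv.of_le one_le_two),
    integral_deriv_sq_sub_deriv_sq hu hv boundary_eq, ← intervalIntegral.integral_neg,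
    ← intervalIntegral.integral_const_mul,
    ← intervalIntegral.integral_sub (by_parts_integrable.const_mul _) cubic_integrable]
  congr 1 with x
  unfold kdvDiscreteGradient
  ring

theorem deriv_kdvDiscreteGradient {x : ℝ} (hu : DifferentiableAt ℝ u x)
    (hv : DifferentiableAt ℝ v x) (hu₂ : DifferentiableAt ℝ (deriv (deriv u)) x)
    (hv₂ : DifferentiableAt ℝ (deriv (deriv v)) x) :
    deriv (kdvDiscreteGradient u v) x =
      -((deriv (deriv (deriv v)) x + deriv (deriv (deriv u)) x) / 2) -
        deriv (fun y => (v y ^ 2 + v y * u y + u y ^ 2) / 3) x := by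
  have nonlinearity_differentiableAt :
      DifferentiableAt ℝ (fun y => (v y ^ 2 + v y * u y + u y ^ 2) / 3) x := by
    fun_prop
  exact (((hv₂.hasDerivAt.add hu₂.hasDerivAt).div_const 2).neg.sub
    nonlinearity_differentiableAt.hasDerivAt).deriv

theorem sub_eq_mul_deriv_kdvDiscreteGradient {Δt x : ℝ} (hΔt : Δt ≠ 0) (hu : ContDiff ℝ 3 u)
    (hv : ContDiff ℝ 3 v)
    (hscheme : (v x - u x) / Δt + (deriv (deriv (deriv v)) x + deriv (deriv (deriv u)) x) / 2 +
      deriv (fun y => (v y ^ 2 + v y * u y + u y ^ 2) / 3) x = 0) :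
    v x - u x = Δt * deriv (kdvDiscreteGradient u v) x := by
  have differentiable_deriv_deriv {f : ℝ → ℝ} (hf : ContDiff ℝ 3 f) :
      Differentiable ℝ (deriv (deriv f)) :=
    ContDiff.differentiable_deriv_two (hf.deriv' (n := 2))
  rw [deriv_kdvDiscreteGradient (hu.differentiable three_ne_zero x)
    (hv.differentiable three_ne_zero x) (differentiable_deriv_deriv hu x)
    (differentiable_deriv_deriv hv x), mul_comm, ← div_eq_iff hΔt]
  linarith

end

theorem kdv_avf_scheme_conserves_hamiltonian_general {L Δt : ℝ} (hΔt : Δt ≠ 0) {u v : ℝ → ℝ}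
    (hu : ContDiff ℝ 3 u) (hv : ContDiff ℝ 3 v)
    (hup : Function.Periodic u L) (hvp : Function.Periodic v L)
    (hscheme : ∀ x : ℝ,
      (v x - u x) / Δt + (deriv (deriv (deriv v)) x + deriv (deriv (deriv u)) x) / 2 +
        deriv (fun y => ((v y) ^ 2 + v y * u y + (u y) ^ 2) / 3) x = 0) :
    kdvHamiltonian L v = kdvHamiltonian L u := by
  have two_le_three : (2 : WithTop ℕ∞) ≤ 3 := by norm_num
  have gradient_contDiff : ContDiff ℝ 1 (kdvDiscreteGradient u v) :=
    contDiff_kdvDiscreteGradient (by norm_num [hu]) (by norm_num [hv])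
  have gradient_boundary : kdvDiscreteGradient u v 0 = kdvDiscreteGradient u v L :=
    (periodic_kdvDiscreteGradient hup hvp).eq.symm
  rw [← sub_eq_zero]
  calc kdvHamiltonian L v - kdvHamiltonian L u
      = ∫ x in (0 : ℝ)..L, kdvDiscreteGradient u v x * (v x - u x) :=
        kdvHamiltonian_sub_eq_integral_kdvDiscreteGradient_mul_sub
          (hu.of_le two_le_three) (hv.of_le two_le_three) hup hvp
    _ = ∫ x in (0 : ℝ)..L,
          Δt * (kdvDiscreteGradient u v x * deriv (kdvDiscreteGradient u v) x) := by
        congr 1 with x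
        rw [sub_eq_mul_deriv_kdvDiscreteGradient hΔt hu hv (hscheme x), mul_left_comm]
    _ = 0 := by
        rw [intervalIntegral.integral_const_mul,
          integral_mul_deriv_self_eq_zero gradient_contDiff gradient_boundary, mul_zero]

/-- One step of the fully implicit AVF scheme for the KdV equation,
`(v - u)/Δt + (v''' + u''')/2 + ((v² + vu + u²)/3)' = 0`, exactly conserves the
KdV Hamiltonian `𝓗[u] = ∫₀ᴸ ((1/2)u_x² - (1/3)u³) dx` on L-periodic smooth functions. -/
theorem kdv_avf_scheme_conserves_hamiltonian
    (L Δt : ℝ) (hL : 0 < L) (hΔt : Δt ≠ 0)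
    (u v : ℝ → ℝ) (hu : ContDiff ℝ (⊤ : ℕ∞) u) (hv : ContDiff ℝ (⊤ : ℕ∞) v)
    (hup : Function.Periodic u L) (hvp : Function.Periodic v L)
    (hscheme : ∀ x : ℝ,
      (v x - u x) / Δt + (deriv (deriv (deriv v)) x + deriv (deriv (deriv u)) x) / 2 +
        deriv (fun y => ((v y) ^ 2 + v y * u y + (u y) ^ 2) / 3) x = 0) :
    (∫ x in (0:ℝ)..L, ((1 / 2) * (deriv v x) ^ 2 - (1 / 3) * (v x) ^ 3)) =
      ∫ x in (0:ℝ)..L, ((1 / 2) * (deriv u x) ^ 2 - (1 / 3) * (u x) ^ 3) := by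
  exact kdv_avf_scheme_conserves_hamiltonian_general hΔt (contDiff_infty.1 hu 3)
    (contDiff_infty.1 hv 3) hup hvp hscheme
end
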